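/- arXiv:2312.16103 — 2 statements merged into one kernel-verified Lean document; each statement's English description precedes it below -/
import Mathlib

section
/- Let μ be a probability mass function on T₁ := 𝒳 × Multiset(𝒳) with 0 < β := Σ_τ μ(τ)·deg(τ) < ∞, let η₁ be the law on T₁ with degree distribution Q and i.i.d. vertex marks, where Q has finite nonzero mean, assume μ is absolutely continuous with respect to η₁, and assume μ̄^{1,o} is symmetric (μ̄^{1,o}(a,b) = μ̄^{1,o}(b,a) for all a,b ∈ 𝒳). Then, as an identity of elements of [0,∞], H(μ ‖ μ̌) = H(μ ‖ μ̂) + β·H(μ̄^{1,o} ‖ μ̄¹ ⊗ μ̄ᵒ); equivalently, (1/2)·(H(μ ‖ μ̌) + H(μ ‖ μ̂)) = H(μ ‖ μ̂) + (β/2)·H(μ̄^{1,o} ‖ μ̄¹ ⊗ μ̄ᵒ). -/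
open scoped BigOperators ENNReal Classical

noncomputable section

/-- Depth-1 rooted marked trees without edge marks: the root mark together with the
multiset of vertex marks of the neighbors of the root. -/
abbrev T1 (𝒳 : Type) : Type := 𝒳 × Multiset 𝒳

section Defs

variable {𝒳 : Type} [Fintype 𝒳] [DecidableEq 𝒳]

/-- Degree of the root of a depth-1 tree. -/
def deg (τ : T1 𝒳) : ℕ := Multiset.card τ.2

/-- Multinomial coefficient `card m ! / ∏ₐ (multiplicity of a in m)!`. -/
def ordCoeff (m : Multiset 𝒳) : ℝ :=
  (Nat.factorial (Multiset.card m) : ℝ) /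
    ∏ a ∈ m.toFinset, (Nat.factorial (m.count a) : ℝ)

/-- The law `η₁` on `T1` with root-degree distribution `Q` and i.i.d. vertex marks:
`η₁ (x, m) = ν x · Q (card m) · (card m)!/∏ₐ count a ! · ∏_{a ∈ m} ν a`. -/
def eta1 (ν : 𝒳 → ℝ) (Q : ℕ → ℝ) (τ : T1 𝒳) : ℝ :=
  ν τ.1 * Q (Multiset.card τ.2) * ordCoeff τ.2 * (τ.2.map ν).prod

/-- Mean root degree `β = ∑_τ μ τ · deg τ`. -/
def meanDeg (μ : T1 𝒳 → ℝ) : ℝ := ∑' τ : T1 𝒳, μ τ * (deg τ : ℝ)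

/-- The neighbor–root marginal
`μ̄^{1,o} (a, b) = (1/β) ∑_m μ (b, m) · (multiplicity of a in m)`. -/
def nbrRoot (μ : T1 𝒳 → ℝ) (a b : 𝒳) : ℝ :=
  (1 / meanDeg μ) * ∑' m : Multiset 𝒳, μ (b, m) * (m.count a : ℝ)

/-- First marginal `μ̄¹` of `μ̄^{1,o}`. -/
def marg1 (μ : T1 𝒳 → ℝ) (a : 𝒳) : ℝ := ∑ b : 𝒳, nbrRoot μ a b

/-- Second marginal `μ̄ᵒ` of `μ̄^{1,o}`. -/
def margO (μ : T1 𝒳 → ℝ) (b : 𝒳) : ℝ := ∑ a : 𝒳, nbrRoot μ a b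

/-- Conditional law `μ̄^{1|o} (a | b) = μ̄^{1,o}(a,b)/μ̄ᵒ(b)` (and `0` if `μ̄ᵒ(b) = 0`). -/
def condNbr (μ : T1 𝒳 → ℝ) (a b : 𝒳) : ℝ :=
  if 0 < margO μ b then nbrRoot μ a b / margO μ b else 0

/-- `μ̌ (x, m) = η₁ (x, m) · ∏_{a ∈ m} μ̄¹ a / ν a` (product with multiplicity; a ratio
with zero denominator is `0`); here `η̄₁¹ = ν`. -/
def muCheck (ν : 𝒳 → ℝ) (Q : ℕ → ℝ) (μ : T1 𝒳 → ℝ) (τ : T1 𝒳) : ℝ :=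
  eta1 ν Q τ * (τ.2.map fun a => marg1 μ a / ν a).prod

/-- `μ̂ (x, m) = η₁ (x, m) · ∏_{a ∈ m} μ̄^{1|o}(a|x) / ν a` (product with multiplicity; a
ratio with zero denominator is `0`); here `η̄₁^{1|o}(a|b) = ν a`. -/
def muHat (ν : 𝒳 → ℝ) (Q : ℕ → ℝ) (μ : T1 𝒳 → ℝ) (τ : T1 𝒳) : ℝ :=
  eta1 ν Q τ * (τ.2.map fun a => condNbr μ a τ.1 / ν a).prod

end Defs

/-- Relative entropy `H(p ‖ q) = ∑ₛ p s * log (p s / q s)` of probability mass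
functions, with value `∞` when `p` is not absolutely continuous with respect to `q`
(or the defining series diverges); `0·log 0 = 0` is automatic since `Real.log 0 = 0`. -/
def relEnt {S : Type*} (p q : S → ℝ) : ℝ≥0∞ :=
  if (∀ s, q s = 0 → p s = 0) ∧ Summable (fun s => p s * Real.log (p s / q s)) then
    ENNReal.ofReal (∑' s, p s * Real.log (p s / q s))
  else ⊤

lemma aux_gibbs {S : Type*} (p q : S → ℝ) (hp0 : ∀ s, 0 ≤ p s) (hq0 : ∀ s, 0 ≤ q s)
    (hp : HasSum p 1) (hq : Summable q) (hq1 : ∑' s, q s ≤ 1)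
    (hac : ∀ s, q s = 0 → p s = 0)
    (hs : Summable (fun s => p s * Real.log (p s / q s))) :
    0 ≤ ∑' s, p s * Real.log (p s / q s) := by
  have h1 : ∑' s, (p s - q s) ≤ ∑' s, p s * Real.log (p s / q s) := by
    refine Summable.tsum_le_tsum (fun s => ?_) (hp.summable.sub hq) hs
    rcases (hp0 s).eq_or_lt with h | h
    · rw [← h]; simpa using hq0 s
    · have hqs : 0 < q s :=
        lt_of_le_of_ne (hq0 s) (fun h' => h.ne' (hac s h'.symm))
      have := Real.one_sub_inv_le_log_of_pos (div_pos h hqs)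
      have h2 := mul_le_mul_of_nonneg_left this h.le
      refine le_trans (le_of_eq ?_) h2
      field_simp
  rw [Summable.tsum_sub hp.summable hq, hp.tsum_eq] at h1
  linarith

lemma aux_log_prod {α : Type*} (f : α → ℝ) (m : Multiset α) (h : ∀ a ∈ m, f a ≠ 0) :
    (m.map f).prod ≠ 0 ∧ Real.log (m.map f).prod = (m.map fun a => Real.log (f a)).sum := by
  induction m using Multiset.induction with
  | empty => simp
  | cons a m ih =>
    obtain ⟨h1, h2⟩ := ih (fun b hb => h b (Multiset.mem_cons_of_mem hb))
    have ha := h a (Multiset.mem_cons_self a m)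
    simp only [Multiset.map_cons, Multiset.prod_cons, Multiset.sum_cons]
    exact ⟨mul_ne_zero ha h1, by rw [Real.log_mul ha h1, h2]⟩

lemma aux_ordCoeff {𝒳 : Type} [Fintype 𝒳] [DecidableEq 𝒳] (m : Multiset 𝒳) :
    ordCoeff m = (m.countPerms : ℝ) := by
  have h := Nat.multinomial_spec m.toFinset (fun a => m.count a)
  have h2 : ∑ a ∈ m.toFinset, m.count a = m.card := Multiset.toFinset_sum_count_eq m
  rw [h2] at h
  have h3 : m.countPerms = Nat.multinomial m.toFinset (fun a => m.count a) := by
    rw [Multiset.countPerms, Finsupp.multinomial_eq]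
    simp only [Multiset.toFinsupp_support]
    rfl
  unfold ordCoeff
  rw [h3, ← h]
  push_cast
  rw [mul_div_cancel_left₀]
  exact Finset.prod_ne_zero_iff.mpr fun a _ => by positivity

lemma aux_multi {𝒳 : Type} [Fintype 𝒳] [DecidableEq 𝒳] (w : 𝒳 → ℝ) (hw0 : ∀ a, 0 ≤ w a)
    (hw1 : ∑ a, w a ≤ 1) (Q : ℕ → ℝ) (hQ0 : ∀ k, 0 ≤ Q k) (hQ1 : HasSum Q 1) :
    Summable (fun m : Multiset 𝒳 => Q m.card * ordCoeff m * (m.map w).prod) ∧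
      ∑' m : Multiset 𝒳, Q m.card * ordCoeff m * (m.map w).prod ≤ 1 := by
  set F : Multiset 𝒳 → ℝ := fun m => Q m.card * ordCoeff m * (m.map w).prod with hF
  have hF0 : ∀ m, 0 ≤ F m := fun m => by
    have : 0 ≤ (m.map w).prod := Multiset.prod_nonneg (by
      intro x hx
      obtain ⟨a, _, rfl⟩ := Multiset.mem_map.mp hx
      exact hw0 a)
    have h2 : 0 ≤ ordCoeff m := by rw [aux_ordCoeff]; positivity
    exact mul_nonneg (mul_nonneg (hQ0 _) h2) this
  let e : (Σ n : ℕ, Sym 𝒳 n) ≃ Multiset 𝒳 := Equiv.sigmaFiberEquiv Multiset.card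
  have he : ∀ n (k : Sym 𝒳 n), e ⟨n, k⟩ = k.1 := fun n k => rfl
  have hin : ∀ n, ∑' k : Sym 𝒳 n, F (e ⟨n, k⟩) = Q n * (∑ a, w a) ^ n := by
    intro n
    rw [tsum_fintype, Finset.sum_pow, Finset.sym_univ, Finset.mul_sum]
    refine Finset.sum_congr rfl fun k _ => ?_
    simp only [he, hF, aux_ordCoeff]
    rw [show Multiset.card k.1 = n from k.2, mul_assoc]
  have hw' : 0 ≤ ∑ a, w a := Finset.sum_nonneg fun a _ => hw0 a
  have hle : ∀ n, Q n * (∑ a, w a) ^ n ≤ Q n := fun n =>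
    mul_le_of_le_one_right (hQ0 n) (pow_le_one₀ hw' hw1)
  have hs1 : Summable fun n => Q n * (∑ a, w a) ^ n :=
    Summable.of_nonneg_of_le (fun n => mul_nonneg (hQ0 n) (pow_nonneg hw' n)) hle hQ1.summable
  have hsig : Summable (F ∘ e) := by
    refine (summable_sigma_of_nonneg (fun _ => hF0 _)).mpr ⟨fun n => ?_, ?_⟩
    · exact Summable.of_finite
    · simpa only [Function.comp, hin] using hs1
  refine ⟨e.summable_iff.mp hsig, ?_⟩
  have e3 := e.tsum_eq F
  rw [hF] at e3
  rw [← e3, ← hF]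
  change ∑' c, (F ∘ e) c ≤ 1
  rw [hsig.tsum_sigma' (fun n => Summable.of_finite)]
  simp only [Function.comp, hin]
  rw [← hQ1.tsum_eq]
  exact hs1.tsum_le_tsum hle hQ1.summable

section aux
variable {𝒳 : Type} [Fintype 𝒳] [DecidableEq 𝒳]

lemma aux_sum_count (μ : T1 𝒳 → ℝ) (hμ0 : ∀ τ, 0 ≤ μ τ)
    (hβfin : Summable fun τ : T1 𝒳 => μ τ * (deg τ : ℝ)) (a : 𝒳) :
    Summable fun τ : T1 𝒳 => μ τ * (τ.2.count a : ℝ) := by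
  refine Summable.of_nonneg_of_le (fun τ => mul_nonneg (hμ0 τ) (by positivity))
    (fun τ => ?_) hβfin
  exact mul_le_mul_of_nonneg_left (by exact_mod_cast Multiset.count_le_card a τ.2) (hμ0 τ)

lemma aux_nbr_tsum (μ : T1 𝒳 → ℝ) (hβpos : 0 < meanDeg μ) (a b : 𝒳) :
    ∑' m : Multiset 𝒳, μ (b, m) * (m.count a : ℝ) = meanDeg μ * nbrRoot μ a b := by
  unfold nbrRoot
  field_simp

lemma aux_nbr_nonneg (μ : T1 𝒳 → ℝ) (hμ0 : ∀ τ, 0 ≤ μ τ) (hβpos : 0 < meanDeg μ) (a b : 𝒳) :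
    0 ≤ nbrRoot μ a b :=
  mul_nonneg (by positivity) (tsum_nonneg fun m => mul_nonneg (hμ0 _) (by positivity))

lemma aux_nbr_pos (μ : T1 𝒳 → ℝ) (hμ0 : ∀ τ, 0 ≤ μ τ) (hβpos : 0 < meanDeg μ)
    (hβfin : Summable fun τ : T1 𝒳 => μ τ * (deg τ : ℝ)) (a b : 𝒳) (m : Multiset 𝒳)
    (h : μ (b, m) ≠ 0) (ha : a ∈ m) : 0 < nbrRoot μ a b := by
  refine mul_pos (by positivity) ?_
  have hs : Summable fun m : Multiset 𝒳 => μ (b, m) * (m.count a : ℝ) :=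
    (aux_sum_count μ hμ0 hβfin a).prod_factor b
  refine hs.tsum_pos (fun m => mul_nonneg (hμ0 _) (by positivity)) m ?_
  have h1 : 0 < μ (b, m) := lt_of_le_of_ne (hμ0 _) h.symm
  have h2 : 0 < m.count a := Multiset.count_pos.mpr ha
  positivity

/-- Weighted sum over trees of neighbor-root statistics. -/
lemma aux_weighted (μ : T1 𝒳 → ℝ) (hμ0 : ∀ τ, 0 ≤ μ τ) (hβpos : 0 < meanDeg μ)
    (hβfin : Summable fun τ : T1 𝒳 => μ τ * (deg τ : ℝ)) (L : 𝒳 → 𝒳 → ℝ) :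
    HasSum (fun τ : T1 𝒳 => ∑ a, μ τ * (τ.2.count a : ℝ) * L a τ.1)
      (meanDeg μ * ∑ a, ∑ b, nbrRoot μ a b * L a b) := by
  rw [Finset.mul_sum]
  refine hasSum_sum fun a _ => ?_
  have hs : Summable fun τ : T1 𝒳 => μ τ * (τ.2.count a : ℝ) * L a τ.1 := by
    refine Summable.of_norm_bounded (g := fun τ : T1 𝒳 =>
      (μ τ * (τ.2.count a : ℝ)) * ∑ b, |L a b|)
      ((aux_sum_count μ hμ0 hβfin a).mul_right _) (fun τ => ?_)
    have h0 : 0 ≤ μ τ * (τ.2.count a : ℝ) := mul_nonneg (hμ0 τ) (by positivity)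
    rw [Real.norm_eq_abs, abs_mul, abs_of_nonneg h0]
    exact mul_le_mul_of_nonneg_left
      (Finset.single_le_sum (f := fun b => |L a b|) (fun _ _ => abs_nonneg _)
        (Finset.mem_univ τ.1)) h0
  have := hs.hasSum
  rw [hs.tsum_prod, tsum_fintype] at this
  convert this using 1
  rw [Finset.mul_sum]
  refine Finset.sum_congr rfl fun b _ => ?_
  simp only
  rw [tsum_mul_right, aux_nbr_tsum μ hβpos, mul_assoc]

lemma aux_nbr_sum (μ : T1 𝒳 → ℝ) (hμ0 : ∀ τ, 0 ≤ μ τ) (hβpos : 0 < meanDeg μ)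
    (hβfin : Summable fun τ : T1 𝒳 => μ τ * (deg τ : ℝ)) :
    ∑ a, ∑ b, nbrRoot μ a b = 1 := by
  have h := (aux_weighted μ hμ0 hβpos hβfin (fun _ _ => 1)).tsum_eq
  have h2 : ∀ τ : T1 𝒳, ∑ a, μ τ * (τ.2.count a : ℝ) * 1 = μ τ * (deg τ : ℝ) := by
    intro τ
    simp only [mul_one]
    rw [← Finset.mul_sum]
    congr 1
    have : ∑ a, τ.2.count a = τ.2.card := Multiset.sum_count_eq_card (fun a _ => Finset.mem_univ a)
    unfold deg
    exact_mod_cast this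
  simp only [h2] at h
  change meanDeg μ = _ at h
  simp only [mul_one] at h
  exact (mul_left_cancel₀ hβpos.ne' (by rw [← h, mul_one])).symm

lemma aux_hat_sum (ν : 𝒳 → ℝ) (hν0 : ∀ x, 0 ≤ ν x) (hν1 : ∑ x, ν x = 1)
    (Q : ℕ → ℝ) (hQ0 : ∀ k, 0 ≤ Q k) (hQ1 : HasSum Q 1)
    (μ : T1 𝒳 → ℝ) (hμ0 : ∀ τ, 0 ≤ μ τ) (hβpos : 0 < meanDeg μ) :
    (∀ τ, 0 ≤ muHat ν Q μ τ) ∧ Summable (muHat ν Q μ) ∧ ∑' τ, muHat ν Q μ τ ≤ 1 := by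
  have hn := aux_nbr_nonneg μ hμ0 hβpos
  have hc0 : ∀ a b, 0 ≤ condNbr μ a b := by
    intro a b
    unfold condNbr
    split_ifs with h
    · exact div_nonneg (hn _ _) h.le
    · exact le_rfl
  have hc1 : ∀ b, ∑ a, condNbr μ a b ≤ 1 := by
    intro b
    unfold condNbr
    split_ifs with h
    · rw [← Finset.sum_div]
      exact (div_self h.ne').le
    · simp
  let w : 𝒳 → 𝒳 → ℝ := fun x a => ν a * (condNbr μ a x / ν a)
  have hw0 : ∀ x a, 0 ≤ w x a := fun x a =>
    mul_nonneg (hν0 a) (div_nonneg (hc0 a x) (hν0 a))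
  have hw1 : ∀ x, ∑ a, w x a ≤ 1 := fun x => by
    refine le_trans (Finset.sum_le_sum fun a _ => ?_) (hc1 x)
    by_cases h : ν a = 0
    · simpa [w, h] using hc0 a x
    · exact (mul_div_cancel₀ _ h).le
  have hform : ∀ x m, muHat ν Q μ (x, m) =
      ν x * (Q m.card * ordCoeff m * (m.map (w x)).prod) := by
    intro x m
    simp only [muHat, eta1, w, Multiset.prod_map_mul]
    ring
  have hm := fun x => aux_multi (w x) (hw0 x) (hw1 x) Q hQ0 hQ1
  have h0 : ∀ τ, 0 ≤ muHat ν Q μ τ := by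
    rintro ⟨x, m⟩
    rw [hform]
    have : 0 ≤ (m.map (w x)).prod := Multiset.prod_nonneg (by
      intro y hy
      obtain ⟨a, _, rfl⟩ := Multiset.mem_map.mp hy
      exact hw0 x a)
    have h2 : 0 ≤ ordCoeff m := by rw [aux_ordCoeff]; positivity
    exact mul_nonneg (hν0 x) (mul_nonneg (mul_nonneg (hQ0 _) h2) this)
  have hs : Summable (muHat ν Q μ) := by
    refine (summable_prod_of_nonneg h0).mpr ⟨fun x => ?_, Summable.of_finite⟩
    simp only [hform]
    exact (hm x).1.mul_left _
  refine ⟨h0, hs, ?_⟩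
  rw [hs.tsum_prod, tsum_fintype, ← hν1]
  refine Finset.sum_le_sum fun x _ => ?_
  simp only [hform]
  rw [tsum_mul_left]
  exact mul_le_of_le_one_right (hν0 x) (hm x).2

end aux

/-- **Alternative representation without edge marks (Corollary `cor-kapparf`).**
If `μ` is a pmf on `T1 = 𝒳 × Multiset 𝒳` with mean degree `β ∈ (0, ∞)`, `η₁` is the
law with degree distribution `Q` and i.i.d. vertex marks, `μ ≪ η₁`, and `μ̄^{1,o}` is
symmetric, then, as identities in `[0, ∞]`,
`H(μ ‖ μ̌) = H(μ ‖ μ̂) + β·H(μ̄^{1,o} ‖ μ̄¹ ⊗ μ̄ᵒ)`, equivalently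
`(1/2)(H(μ ‖ μ̌) + H(μ ‖ μ̂)) = H(μ ‖ μ̂) + (β/2)·H(μ̄^{1,o} ‖ μ̄¹ ⊗ μ̄ᵒ)`. -/
theorem rate_function_vertex_marks_only
    {𝒳 : Type} [Fintype 𝒳] [DecidableEq 𝒳]
    (ν : 𝒳 → ℝ) (hν0 : ∀ x, 0 ≤ ν x) (hν1 : ∑ x, ν x = 1)
    (Q : ℕ → ℝ) (hQ0 : ∀ k, 0 ≤ Q k) (hQ1 : HasSum Q 1)
    (hQm : Summable fun k : ℕ => (k : ℝ) * Q k)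
    (hQpos : 0 < ∑' k : ℕ, (k : ℝ) * Q k)
    (μ : T1 𝒳 → ℝ) (hμ0 : ∀ τ, 0 ≤ μ τ) (hμ1 : HasSum μ 1)
    (hβfin : Summable fun τ : T1 𝒳 => μ τ * (deg τ : ℝ))
    (hβpos : 0 < meanDeg μ)
    (habs : ∀ τ, eta1 ν Q τ = 0 → μ τ = 0)
    (hsym : ∀ a b : 𝒳, nbrRoot μ a b = nbrRoot μ b a) :
    relEnt μ (muCheck ν Q μ) =
        relEnt μ (muHat ν Q μ) +
          ENNReal.ofReal (meanDeg μ) *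
            relEnt (fun p : 𝒳 × 𝒳 => nbrRoot μ p.1 p.2)
              (fun p : 𝒳 × 𝒳 => marg1 μ p.1 * margO μ p.2) ∧
      (relEnt μ (muCheck ν Q μ) + relEnt μ (muHat ν Q μ)) / 2 =
        relEnt μ (muHat ν Q μ) +
          ENNReal.ofReal (meanDeg μ / 2) *
            relEnt (fun p : 𝒳 × 𝒳 => nbrRoot μ p.1 p.2)
              (fun p : 𝒳 × 𝒳 => marg1 μ p.1 * margO μ p.2) := by
  have hn := aux_nbr_nonneg μ hμ0 hβpos
  have hnp := aux_nbr_pos μ hμ0 hβpos hβfin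
  have hm1 : ∀ a b, nbrRoot μ a b ≤ marg1 μ a := fun a b =>
    Finset.single_le_sum (f := fun b => nbrRoot μ a b) (fun _ _ => hn _ _) (Finset.mem_univ b)
  have hmO : ∀ a b, nbrRoot μ a b ≤ margO μ b := fun a b =>
    Finset.single_le_sum (f := fun a => nbrRoot μ a b) (fun _ _ => hn _ _) (Finset.mem_univ a)
  have hsum := aux_nbr_sum μ hμ0 hβpos hβfin
  obtain ⟨hH0, hHs, hH1⟩ := aux_hat_sum ν hν0 hν1 Q hQ0 hQ1 μ hμ0 hβpos
  -- pointwise facts on the support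
  have hcond : ∀ a b, 0 < nbrRoot μ a b → condNbr μ a b = nbrRoot μ a b / margO μ b := by
    intro a b h
    unfold condNbr
    rw [if_pos (h.trans_le (hmO a b))]
  have hν : ∀ x m, μ (x, m) ≠ 0 → ∀ a ∈ m, ν a ≠ 0 := by
    intro x m h a ha h0
    apply h
    apply habs
    have : (m.map ν).prod = 0 := Multiset.prod_eq_zero (Multiset.mem_map.mpr ⟨a, ha, h0⟩)
    simp [eta1, this]
  have hfh : ∀ x m, μ (x, m) ≠ 0 → ∀ a ∈ m, condNbr μ a x / ν a ≠ 0 := by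
    intro x m h a ha
    have hp := hnp a x m h ha
    rw [hcond a x hp]
    exact div_ne_zero (div_pos hp (hp.trans_le (hmO a x))).ne' (hν x m h a ha)
  have hfc : ∀ x m, μ (x, m) ≠ 0 → ∀ a ∈ m, marg1 μ a / ν a ≠ 0 := by
    intro x m h a ha
    have hp := hnp a x m h ha
    exact div_ne_zero (hp.trans_le (hm1 a x)).ne' (hν x m h a ha)
  have hacH : ∀ τ, muHat ν Q μ τ = 0 → μ τ = 0 := by
    rintro ⟨x, m⟩ h
    by_contra hne
    exact mul_ne_zero (fun h0 => hne (habs _ h0)) (aux_log_prod _ m (hfh x m hne)).1 h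
  have hacC : ∀ τ, muCheck ν Q μ τ = 0 → μ τ = 0 := by
    rintro ⟨x, m⟩ h
    by_contra hne
    exact mul_ne_zero (fun h0 => hne (habs _ h0)) (aux_log_prod _ m (hfc x m hne)).1 h
  let L : 𝒳 → 𝒳 → ℝ := fun a b => Real.log (condNbr μ a b / marg1 μ a)
  have hpt : ∀ τ : T1 𝒳, μ τ * Real.log (μ τ / muCheck ν Q μ τ) =
      μ τ * Real.log (μ τ / muHat ν Q μ τ) + ∑ a, μ τ * (τ.2.count a : ℝ) * L a τ.1 := by
    rintro ⟨x, m⟩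
    by_cases h : μ (x, m) = 0
    · simp [h]
    have he : eta1 ν Q (x, m) ≠ 0 := fun h0 => h (habs _ h0)
    obtain ⟨c1, c2⟩ := aux_log_prod _ m (hfc x m h)
    obtain ⟨d1, d2⟩ := aux_log_prod _ m (hfh x m h)
    have hL : ∑ a, (m.count a : ℝ) * L a x =
        (m.map fun a => Real.log (condNbr μ a x / ν a)).sum
          - (m.map fun a => Real.log (marg1 μ a / ν a)).sum := by
      rw [← Multiset.sum_map_sub]
      have e1 : (m.map fun a => Real.log (condNbr μ a x / ν a) - Real.log (marg1 μ a / ν a))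
          = m.map fun a => L a x := by
        refine Multiset.map_congr rfl fun a ha => ?_
        rw [← Real.log_div (hfh x m h a ha) (hfc x m h a ha),
          div_div_div_cancel_right₀ (hν x m h a ha)]
      rw [e1, Finset.sum_multiset_map_count]
      simp only [nsmul_eq_mul]
      symm
      refine Finset.sum_subset (Finset.subset_univ _) fun a _ ha => ?_
      rw [Multiset.mem_toFinset] at ha
      simp [Multiset.count_eq_zero_of_notMem ha]
    simp only [mul_assoc]
    rw [← Finset.mul_sum, ← mul_add, hL]
    congr 1
    simp only [muCheck, muHat]
    rw [Real.log_div h (mul_ne_zero he c1), Real.log_div h (mul_ne_zero he d1),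
      Real.log_mul he c1, Real.log_mul he d1, c2, d2]
    ring
  have hD := aux_weighted μ hμ0 hβpos hβfin L
  set C : ℝ := ∑ a, ∑ b, nbrRoot μ a b * L a b with hC
  -- the finite relative entropy
  have hprod : ∀ p : 𝒳 × 𝒳, marg1 μ p.1 * margO μ p.2 = 0 → nbrRoot μ p.1 p.2 = 0 := by
    rintro ⟨a, b⟩ h
    by_contra hne
    have hp : 0 < nbrRoot μ a b := lt_of_le_of_ne (hn a b) (Ne.symm hne)
    exact (mul_pos (hp.trans_le (hm1 a b)) (hp.trans_le (hmO a b))).ne' h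
  have hCeq : ∑' p : 𝒳 × 𝒳, nbrRoot μ p.1 p.2 *
      Real.log (nbrRoot μ p.1 p.2 / (marg1 μ p.1 * margO μ p.2)) = C := by
    rw [tsum_fintype, Fintype.sum_prod_type, hC]
    refine Finset.sum_congr rfl fun a _ => Finset.sum_congr rfl fun b _ => ?_
    rcases (hn a b).eq_or_lt with h | h
    · simp [← h]
    · simp only [L]
      rw [hcond a b h, div_div, mul_comm (margO μ b)]
  have hC0 : 0 ≤ C := by
    rw [← hCeq]
    refine aux_gibbs (fun p : 𝒳 × 𝒳 => nbrRoot μ p.1 p.2)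
      (fun p : 𝒳 × 𝒳 => marg1 μ p.1 * margO μ p.2) (fun p => hn _ _)
      (fun p => mul_nonneg (Finset.sum_nonneg fun _ _ => hn _ _)
        (Finset.sum_nonneg fun _ _ => hn _ _)) ?_ Summable.of_finite ?_ hprod Summable.of_finite
    · rw [← hsum, ← Fintype.sum_prod_type (f := fun p : 𝒳 × 𝒳 => nbrRoot μ p.1 p.2)]
      exact hasSum_fintype _
    · rw [tsum_fintype, Fintype.sum_prod_type]
      simp only
      rw [← Finset.sum_mul_sum]
      have e1 : ∑ a, marg1 μ a = 1 := hsum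
      have e2 : ∑ b, margO μ b = 1 := by
        rw [← hsum, Finset.sum_comm]; rfl
      rw [e1, e2, one_mul]
  have hEC : relEnt (fun p : 𝒳 × 𝒳 => nbrRoot μ p.1 p.2)
      (fun p : 𝒳 × 𝒳 => marg1 μ p.1 * margO μ p.2) = ENNReal.ofReal C := by
    unfold relEnt
    rw [if_pos ⟨hprod, Summable.of_finite⟩, hCeq]
  have hmain : relEnt μ (muCheck ν Q μ) = relEnt μ (muHat ν Q μ) +
      ENNReal.ofReal (meanDeg μ) * ENNReal.ofReal C := by
    rw [← ENNReal.ofReal_mul hβpos.le]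
    by_cases hS : Summable (fun τ => μ τ * Real.log (μ τ / muHat ν Q μ τ))
    · have hB := aux_gibbs μ (muHat ν Q μ) hμ0 hH0 hμ1 hHs hH1 hacH hS
      have hT := hS.hasSum.add hD
      simp only [← hpt] at hT
      unfold relEnt
      rw [if_pos ⟨hacC, hT.summable⟩, if_pos ⟨hacH, hS⟩, hT.tsum_eq,
        ENNReal.ofReal_add hB (mul_nonneg hβpos.le hC0)]
    · have hS' : ¬ Summable (fun τ => μ τ * Real.log (μ τ / muCheck ν Q μ τ)) := by
        intro h
        apply hS
        have := h.sub hD.summable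
        simpa only [hpt, add_sub_cancel_right] using this
      unfold relEnt
      rw [if_neg (fun h => hS' h.2), if_neg (fun h => hS h.2), top_add]
  rw [hEC]
  refine ⟨hmain, ?_⟩
  rw [hmain, ENNReal.ofReal_div_of_pos (by norm_num : (0 : ℝ) < 2)]
  generalize relEnt μ (muHat ν Q μ) = H
  generalize ENNReal.ofReal C = c
  generalize ENNReal.ofReal (meanDeg μ) = β
  rw [show ENNReal.ofReal 2 = 2 by simp, show H + β * c + H = (H + H) + β * c by ring,
    ENNReal.add_div, ENNReal.add_div, ENNReal.add_halves, div_eq_mul_inv, div_eq_mul_inv,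
    mul_right_comm]
end
end

section
/- Assume the Gibbs setup below, and suppose Σ_{n=0}^M n·α(n) · Σ_{x∈𝒳} ν(x)·h(x) < c < κ·max_{x∈𝒳} h(x). Let λ > 0 satisfy Σ_{n=0}^M Σ_{x∈𝒳} n·h(x)·γ(n,x) = c, where γ(n,x) := α(n)·ν(x)·exp(λ·n·h(x))/(Σ_{y∈𝒳} ν(y)·exp(λ·n·h(y))), and set ψ_γ(x) := (1/κ)·Σ_{n=0}^M n·γ(n,x) and μ*(x,m) := γ(card m, x)·((card m)!/∏_{a∈𝒳}(multiplicity of a in m)!)·∏_{a∈m} ψ_γ(a) for (x,m) ∈ T₁. Then: (i) μ* is a probability mass function on T₁ with Σ_τ μ*(τ)·f(τ) = c; (ii) 𝕴(μ*) = H(γ ‖ α⊗ν); and (iii) for every probability mass function μ on T₁ with Σ_τ μ(τ)·f(τ) ≥ c one has 𝕴(μ) ≥ H(γ ‖ α⊗ν), with equality if and only if μ = μ*. -/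
open scoped BigOperators ENNReal Classical

noncomputable section

/-- Law of the root degree under `μ`: `degLaw μ n = μ {τ : deg τ = n}`. -/
def degLaw {𝒳 : Type} [Fintype 𝒳] [DecidableEq 𝒳] (μ : T1 𝒳 → ℝ) (n : ℕ) : ℝ :=
  ∑' τ : T1 𝒳, if deg τ = n then μ τ else 0

/-- The rate function `𝕴(μ) = (1/2)(H(μ ‖ μ̌) + H(μ ‖ μ̂))` if `μ ≪ η₁^α`, the law of
the root degree under `μ` is `α`, and `μ̄^{1,o}` is symmetric; `𝕴(μ) = ∞` otherwise. -/
def rate {𝒳 : Type} [Fintype 𝒳] [DecidableEq 𝒳] (ν : 𝒳 → ℝ) (α : ℕ → ℝ)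
    (μ : T1 𝒳 → ℝ) : ℝ≥0∞ :=
  if (∀ τ, eta1 ν α τ = 0 → μ τ = 0) ∧ (∀ n, degLaw μ n = α n) ∧
      (∀ a b, nbrRoot μ a b = nbrRoot μ b a) then
    (relEnt μ (muCheck ν α μ) + relEnt μ (muHat ν α μ)) / 2
  else ⊤

section Helpers

variable {𝒳 : Type} [Fintype 𝒳] [DecidableEq 𝒳]

/-- multisets of cardinality `n` -/
def SS (𝒳 : Type) [Fintype 𝒳] [DecidableEq 𝒳] (n : ℕ) : Finset (Multiset 𝒳) :=
  ((Finset.univ : Finset 𝒳).sym n).image (fun k : Sym 𝒳 n => (k : Multiset 𝒳))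

theorem mem_SS {n : ℕ} {m : Multiset 𝒳} : m ∈ SS 𝒳 n ↔ Multiset.card m = n := by
  unfold SS
  simp only [Finset.mem_image]
  constructor
  · rintro ⟨k, _, rfl⟩; exact k.2
  · intro hm
    exact ⟨⟨m, hm⟩, Finset.mem_sym_iff.2 (fun _ _ => Finset.mem_univ _), rfl⟩

/-- multisets of cardinality at most `M` -/
def BB (𝒳 : Type) [Fintype 𝒳] [DecidableEq 𝒳] (M : ℕ) : Finset (Multiset 𝒳) :=
  (Finset.range (M + 1)).biUnion (SS 𝒳)

theorem mem_BB {M : ℕ} {m : Multiset 𝒳} : m ∈ BB 𝒳 M ↔ Multiset.card m ≤ M := by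
  unfold BB
  simp [mem_SS, Nat.lt_succ_iff]

theorem sum_BB (M : ℕ) (g : Multiset 𝒳 → ℝ) :
    ∑ m ∈ BB 𝒳 M, g m = ∑ n ∈ Finset.range (M + 1), ∑ m ∈ SS 𝒳 n, g m := by
  unfold BB
  rw [Finset.sum_biUnion]
  intro i _ j _ hij
  rw [Function.onFun, Finset.disjoint_left]
  intro m hi hj
  rw [mem_SS] at hi hj
  exact hij (hi.symm.trans hj)

/-- trees of degree at most `M` -/
def FF (𝒳 : Type) [Fintype 𝒳] [DecidableEq 𝒳] (M : ℕ) : Finset (T1 𝒳) :=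
  (Finset.univ : Finset 𝒳) ×ˢ BB 𝒳 M

theorem mem_FF {M : ℕ} {τ : T1 𝒳} : τ ∈ FF 𝒳 M ↔ Multiset.card τ.2 ≤ M := by
  unfold FF
  simp [mem_BB]

theorem sum_FF (M : ℕ) (g : T1 𝒳 → ℝ) :
    ∑ τ ∈ FF 𝒳 M, g τ = ∑ x, ∑ n ∈ Finset.range (M + 1), ∑ m ∈ SS 𝒳 n, g (x, m) := by
  unfold FF
  rw [Finset.sum_product]
  exact Finset.sum_congr rfl fun x _ => sum_BB M _

theorem hasSum_FF (M : ℕ) (g : T1 𝒳 → ℝ) (hg : ∀ τ : T1 𝒳, M < Multiset.card τ.2 → g τ = 0) :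
    HasSum g (∑ τ ∈ FF 𝒳 M, g τ) := by
  apply hasSum_sum_of_ne_finset_zero
  intro τ hτ
  apply hg
  rw [mem_FF] at hτ
  omega

theorem tsum_BB (M : ℕ) (g : Multiset 𝒳 → ℝ) (hg : ∀ m, M < Multiset.card m → g m = 0) :
    ∑' m, g m = ∑ m ∈ BB 𝒳 M, g m := by
  apply tsum_eq_sum
  intro m hm
  apply hg
  rw [mem_BB] at hm
  omega

theorem ordCoeff_pos (m : Multiset 𝒳) : 0 < ordCoeff m := by
  unfold ordCoeff
  positivity

theorem ordCoeff_eq (m : Multiset 𝒳) : ordCoeff m = (m.countPerms : ℝ) := by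
  have h := Nat.multinomial_spec m.toFinset (fun a => m.count a)
  rw [Multiset.toFinset_sum_count_eq] at h
  have h2 : m.countPerms = Nat.multinomial m.toFinset (fun a => m.count a) := by
    rw [Multiset.countPerms, Finsupp.multinomial_eq, Multiset.toFinsupp_support]
    rfl
  unfold ordCoeff
  rw [div_eq_iff (by positivity), h2, ← h]
  push_cast
  ring

theorem sum_SS (p : 𝒳 → ℝ) (n : ℕ) :
    ∑ m ∈ SS 𝒳 n, ordCoeff m * (m.map p).prod = (∑ a, p a) ^ n := by
  rw [Finset.sum_pow]
  unfold SS
  rw [Finset.sum_image (by intro a _ b _ hab; exact Subtype.ext hab)]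
  refine Finset.sum_congr rfl fun k _ => ?_
  rw [ordCoeff_eq]
  rfl

theorem prod_univ (m : Multiset 𝒳) :
    ∏ a ∈ m.toFinset, (Nat.factorial (m.count a) : ℝ) = ∏ a, (Nat.factorial (m.count a) : ℝ) := by
  apply Finset.prod_subset (Finset.subset_univ _)
  intro a _ ha
  rw [Multiset.mem_toFinset] at ha
  simp [Multiset.count_eq_zero_of_notMem ha]

theorem ordCoeff_cons (a : 𝒳) (m : Multiset 𝒳) :
    ordCoeff (a ::ₘ m) * ((a ::ₘ m).count a : ℝ) = (Multiset.card m + 1) * ordCoeff m := by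
  unfold ordCoeff
  rw [prod_univ, prod_univ]
  have h1 : ∏ b, (Nat.factorial ((a ::ₘ m).count b) : ℝ)
      = (m.count a + 1) * ∏ b, (Nat.factorial (m.count b) : ℝ) := by
    rw [← Finset.mul_prod_erase _ _ (Finset.mem_univ a),
      ← Finset.mul_prod_erase _ (fun b => (Nat.factorial (m.count b) : ℝ)) (Finset.mem_univ a)]
    rw [Multiset.count_cons_self, Nat.factorial_succ]
    have : ∏ x ∈ Finset.univ.erase a, (Nat.factorial ((a ::ₘ m).count x) : ℝ)
        = ∏ x ∈ Finset.univ.erase a, (Nat.factorial (m.count x) : ℝ) := by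
      refine Finset.prod_congr rfl fun b hb => ?_
      rw [Multiset.count_cons_of_ne (Finset.ne_of_mem_erase hb)]
    rw [this]
    push_cast
    ring
  rw [h1, Multiset.card_cons, Nat.factorial_succ, Multiset.count_cons_self]
  have h2 : (0:ℝ) < ∏ b, (Nat.factorial (m.count b) : ℝ) := by positivity
  have h3 : (0:ℝ) < (m.count a : ℝ) + 1 := by positivity
  push_cast
  field_simp

theorem sum_SS_count (p : 𝒳 → ℝ) (hp : ∑ a, p a = 1) (n : ℕ) (a : 𝒳) :
    ∑ m ∈ SS 𝒳 n, ordCoeff m * (m.map p).prod * (m.count a : ℝ) = n * p a := by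
  cases n with
  | zero =>
    rw [Finset.sum_eq_zero]
    · simp
    · intro m hm
      rw [mem_SS, Multiset.card_eq_zero] at hm
      simp [hm]
  | succ n =>
    have h1 : ∑ m ∈ SS 𝒳 (n+1), ordCoeff m * (m.map p).prod * (m.count a : ℝ)
        = ∑ m ∈ (SS 𝒳 n).image (fun m => a ::ₘ m),
            ordCoeff m * (m.map p).prod * (m.count a : ℝ) := by
      symm
      apply Finset.sum_subset
      · intro m hm
        rw [Finset.mem_image] at hm
        obtain ⟨m', hm', rfl⟩ := hm
        rw [mem_SS] at hm' ⊢
        simp [hm']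
      · intro m hm hm2
        have : a ∉ m := by
          intro ha
          apply hm2
          rw [Finset.mem_image]
          refine ⟨m.erase a, ?_, Multiset.cons_erase ha⟩
          rw [mem_SS] at hm ⊢
          rw [Multiset.card_erase_of_mem ha, hm]
          rfl
        simp [Multiset.count_eq_zero_of_notMem this]
    rw [h1, Finset.sum_image (by intro x _ y _ hxy; exact (Multiset.cons_inj_right a).1 hxy)]
    have h2 : ∀ m ∈ SS 𝒳 n, ordCoeff (a ::ₘ m) * ((a ::ₘ m).map p).prod * ((a ::ₘ m).count a : ℝ)
        = ((n+1 : ℕ) * p a) * (ordCoeff m * (m.map p).prod) := by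
      intro m hm
      rw [mem_SS] at hm
      have := ordCoeff_cons a m
      rw [Multiset.map_cons, Multiset.prod_cons, mul_right_comm, this, hm]
      push_cast
      ring
    rw [Finset.sum_congr rfl h2, ← Finset.mul_sum, sum_SS, hp]
    simp

theorem sum_map_univ (m : Multiset 𝒳) (h : 𝒳 → ℝ) :
    (m.map h).sum = ∑ a, (m.count a : ℝ) * h a := by
  rw [Finset.sum_multiset_map_count]
  simp only [nsmul_eq_mul]
  apply Finset.sum_subset (Finset.subset_univ _)
  intro a _ ha
  rw [Multiset.mem_toFinset] at ha
  simp [Multiset.count_eq_zero_of_notMem ha]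

theorem sum_count_univ (m : Multiset 𝒳) :
    ∑ a, (m.count a : ℝ) = Multiset.card m := by
  have := sum_map_univ m (fun _ => 1)
  simpa using this.symm

theorem gibbs_term {p q : ℝ} (hp : 0 ≤ p) (hq : 0 ≤ q) (hqp : q = 0 → p = 0) :
    0 ≤ p * Real.log (p / q) - p + q ∧ (p * Real.log (p / q) - p + q = 0 → p = q) := by
  rcases hp.eq_or_lt with rfl | hp
  · simpa using ⟨hq, fun h => h.symm⟩
  have hq : 0 < q := lt_of_le_of_ne hq fun h => hp.ne' (hqp h.symm)
  have e : Real.log (p / q) = - Real.log (q / p) := by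
    rw [← Real.log_inv, inv_div]
  have e2 : p * Real.log (p / q) - p + q = p * (q / p - 1 - Real.log (q / p)) := by
    rw [e]; field_simp; ring
  rw [e2]
  have hr : 0 < q / p := div_pos hq hp
  refine ⟨mul_nonneg hp.le (by linarith [Real.log_le_sub_one_of_pos hr]), fun h => ?_⟩
  by_contra hne
  have := Real.log_lt_sub_one_of_pos hr (fun h => hne (by rw [div_eq_one_iff_eq hp.ne'] at h; exact h.symm))
  have h3 : 0 < p * (q / p - 1 - Real.log (q / p)) := mul_pos hp (by linarith)
  linarith

theorem gibbs_sum {S : Type*} (F : Finset S) (p q : S → ℝ) (hp : ∀ s, 0 ≤ p s) (hq : ∀ s, 0 ≤ q s)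
    (hqp : ∀ s, q s = 0 → p s = 0) (hp1 : ∑ s ∈ F, p s = 1) (hq1 : ∑ s ∈ F, q s ≤ 1) :
    0 ≤ ∑ s ∈ F, p s * Real.log (p s / q s) ∧
      (∑ s ∈ F, p s * Real.log (p s / q s) = 0 → ∀ s ∈ F, p s = q s) := by
  have key := fun s => gibbs_term (hp s) (hq s) (hqp s)
  have hs : ∑ s ∈ F, (p s * Real.log (p s / q s) - p s + q s)
      = ∑ s ∈ F, p s * Real.log (p s / q s) - 1 + ∑ s ∈ F, q s := by
    rw [Finset.sum_add_distrib, Finset.sum_sub_distrib, hp1]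
  have h0 : 0 ≤ ∑ s ∈ F, (p s * Real.log (p s / q s) - p s + q s) :=
    Finset.sum_nonneg fun s _ => (key s).1
  refine ⟨by linarith, fun h => ?_⟩
  have h1 : ∑ s ∈ F, (p s * Real.log (p s / q s) - p s + q s) = 0 := by linarith
  rw [Finset.sum_eq_zero_iff_of_nonneg fun s _ => (key s).1] at h1
  exact fun s hs => (key s).2 (h1 s hs)

theorem relEnt_eq {S : Type*} (F : Finset S) (p q : S → ℝ) (hpF : ∀ s, s ∉ F → p s = 0)
    (hqp : ∀ s, q s = 0 → p s = 0) :
    relEnt p q = ENNReal.ofReal (∑ s ∈ F, p s * Real.log (p s / q s)) := by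
  have hs : HasSum (fun s => p s * Real.log (p s / q s)) (∑ s ∈ F, p s * Real.log (p s / q s)) := by
    apply hasSum_sum_of_ne_finset_zero
    intro s hs
    simp [hpF s hs]
  unfold relEnt
  rw [if_pos ⟨hqp, hs.summable⟩, hs.tsum_eq]

/-- Splitting of the relative entropy along a positive tilt `r`. -/
theorem tilt_split {S : Type*} (F : Finset S) (p q r : S → ℝ)
    (hqp : ∀ s, q s = 0 → p s = 0) (hr : ∀ s, 0 < r s) :
    ∑ s ∈ F, p s * Real.log (p s / q s)
      = ∑ s ∈ F, p s * Real.log (p s / (r s * q s)) + ∑ s ∈ F, p s * Real.log (r s) := by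
  rw [← Finset.sum_add_distrib]
  refine Finset.sum_congr rfl fun s _ => ?_
  by_cases hp : p s = 0
  · simp [hp]
  have hq : q s ≠ 0 := fun h => hp (hqp s h)
  rw [Real.log_div hp hq, Real.log_div hp (mul_ne_zero (hr s).ne' hq),
    Real.log_mul (hr s).ne' hq]
  ring


/-- generic tree law -/
def WW (ν : 𝒳 → ℝ) (α : ℕ → ℝ) (p : 𝒳 → 𝒳 → ℝ) (τ : T1 𝒳) : ℝ :=
  ν τ.1 * α (Multiset.card τ.2) * (ordCoeff τ.2 * (τ.2.map (p τ.1)).prod)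

/-- partition function -/
def ZZ (lam : ℝ) (ν h : 𝒳 → ℝ) (n : ℕ) : ℝ := ∑ y, ν y * Real.exp (lam * n * h y)

/-- tilt -/
def rr (lam : ℝ) (ν h : 𝒳 → ℝ) (n : ℕ) (x : 𝒳) : ℝ := Real.exp (lam * n * h x) / ZZ lam ν h n

theorem eta_mul (ν : 𝒳 → ℝ) (hν0 : ∀ x, 0 < ν x) (α : ℕ → ℝ) (τ : T1 𝒳) (p : 𝒳 → ℝ) :
    eta1 ν α τ * (τ.2.map fun a => p a / ν a).prod
      = ν τ.1 * α (Multiset.card τ.2) * (ordCoeff τ.2 * (τ.2.map p).prod) := by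
  have : (τ.2.map ν).prod * (τ.2.map fun a => p a / ν a).prod = (τ.2.map p).prod := by
    rw [← Multiset.prod_map_mul]
    congr 1
    refine Multiset.map_congr rfl fun a _ => ?_
    have := (hν0 a).ne'
    field_simp
  unfold eta1
  rw [← this]
  ring

theorem muCheck_eq (ν : 𝒳 → ℝ) (hν0 : ∀ x, 0 < ν x) (α : ℕ → ℝ) (μ : T1 𝒳 → ℝ) :
    muCheck ν α μ = WW ν α (fun _ => marg1 μ) := by
  funext τ
  exact eta_mul ν hν0 α τ _

theorem muHat_eq (ν : 𝒳 → ℝ) (hν0 : ∀ x, 0 < ν x) (α : ℕ → ℝ) (μ : T1 𝒳 → ℝ) :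
    muHat ν α μ = WW ν α (fun x a => condNbr μ a x) := by
  funext τ
  exact eta_mul ν hν0 α τ _

theorem prod_map_nonneg (m : Multiset 𝒳) (p : 𝒳 → ℝ) (hp : ∀ a, 0 ≤ p a) : 0 ≤ (m.map p).prod := by
  apply Multiset.prod_nonneg
  intro a ha
  rw [Multiset.mem_map] at ha
  obtain ⟨b, _, rfl⟩ := ha
  exact hp b

theorem prod_map_ne (m : Multiset 𝒳) (p : 𝒳 → ℝ) (hp : ∀ a ∈ m, p a ≠ 0) : (m.map p).prod ≠ 0 := by
  apply Multiset.prod_ne_zero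
  intro ha
  rw [Multiset.mem_map] at ha
  obtain ⟨b, hb, h0⟩ := ha
  exact hp b hb h0

theorem WW_nonneg (ν : 𝒳 → ℝ) (hν0 : ∀ x, 0 < ν x) (α : ℕ → ℝ) (hα0 : ∀ n, 0 ≤ α n)
    (p : 𝒳 → 𝒳 → ℝ) (hp : ∀ x a, 0 ≤ p x a) (τ : T1 𝒳) : 0 ≤ WW ν α p τ :=
  mul_nonneg (mul_nonneg (hν0 _).le (hα0 _))
    (mul_nonneg (ordCoeff_pos _).le (prod_map_nonneg _ _ (hp _)))

theorem ZZ_pos [Nonempty 𝒳] (lam : ℝ) (ν h : 𝒳 → ℝ) (hν0 : ∀ x, 0 < ν x) (n : ℕ) : 0 < ZZ lam ν h n :=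
  Finset.sum_pos (fun x _ => mul_pos (hν0 x) (Real.exp_pos _)) Finset.univ_nonempty

theorem rr_pos [Nonempty 𝒳] (lam : ℝ) (ν h : 𝒳 → ℝ) (hν0 : ∀ x, 0 < ν x) (n : ℕ) (x : 𝒳) :
    0 < rr lam ν h n x := div_pos (Real.exp_pos _) (ZZ_pos lam ν h hν0 n)

theorem sum_rr [Nonempty 𝒳] (lam : ℝ) (ν h : 𝒳 → ℝ) (hν0 : ∀ x, 0 < ν x) (n : ℕ) :
    ∑ x, ν x * rr lam ν h n x = 1 := by
  have := (ZZ_pos lam ν h hν0 n).ne'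
  unfold rr
  simp only [← mul_div_assoc]
  rw [← Finset.sum_div]
  exact div_self this

theorem log_rr [Nonempty 𝒳] (lam : ℝ) (ν h : 𝒳 → ℝ) (hν0 : ∀ x, 0 < ν x) (n : ℕ) (x : 𝒳) :
    Real.log (rr lam ν h n x) = lam * (n * h x) - Real.log (ZZ lam ν h n) := by
  unfold rr
  rw [Real.log_div (Real.exp_pos _).ne' (ZZ_pos lam ν h hν0 n).ne', Real.log_exp]
  ring

theorem sum_tilt (lam : ℝ) (ν h : 𝒳 → ℝ) (M : ℕ) (α : ℕ → ℝ) (p : 𝒳 → 𝒳 → ℝ) :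
    ∑ τ ∈ FF 𝒳 M, rr lam ν h (Multiset.card τ.2) τ.1 * WW ν α p τ
      = ∑ x, ∑ n ∈ Finset.range (M + 1), α n * (ν x * rr lam ν h n x) * (∑ a, p x a) ^ n := by
  rw [sum_FF]
  refine Finset.sum_congr rfl fun x _ => Finset.sum_congr rfl fun n _ => ?_
  rw [← sum_SS, Finset.mul_sum]
  refine Finset.sum_congr rfl fun m hm => ?_
  rw [mem_SS] at hm
  simp only [WW, hm]
  ring

theorem sum_gam [Nonempty 𝒳] (lam : ℝ) (ν h : 𝒳 → ℝ) (hν0 : ∀ x, 0 < ν x) (M : ℕ) (α : ℕ → ℝ)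
    (hα1 : ∑ n ∈ Finset.range (M + 1), α n = 1) :
    ∑ x, ∑ n ∈ Finset.range (M + 1), α n * (ν x * rr lam ν h n x) = 1 := by
  rw [Finset.sum_comm]
  simp_rw [← Finset.mul_sum, sum_rr lam ν h hν0, mul_one]
  exact hα1

theorem sum_tilt_le [Nonempty 𝒳] (lam : ℝ) (ν h : 𝒳 → ℝ) (hν0 : ∀ x, 0 < ν x) (M : ℕ) (α : ℕ → ℝ)
    (hα0 : ∀ n, 0 ≤ α n) (hα1 : ∑ n ∈ Finset.range (M + 1), α n = 1)
    (p : 𝒳 → 𝒳 → ℝ) (hp : ∀ x a, 0 ≤ p x a) (hp1 : ∀ x, ∑ a, p x a ≤ 1) :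
    ∑ τ ∈ FF 𝒳 M, rr lam ν h (Multiset.card τ.2) τ.1 * WW ν α p τ ≤ 1 := by
  rw [sum_tilt, ← sum_gam lam ν h hν0 M α hα1]
  refine Finset.sum_le_sum fun x _ => Finset.sum_le_sum fun n _ => ?_
  apply mul_le_of_le_one_right
  · exact mul_nonneg (hα0 n) (mul_nonneg (hν0 x).le (rr_pos lam ν h hν0 n x).le)
  · exact pow_le_one₀ (Finset.sum_nonneg fun a _ => hp x a) (hp1 x)

section mu

variable {M : ℕ} {α : ℕ → ℝ} {μ : T1 𝒳 → ℝ}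

theorem degLaw_eq (hsupp : ∀ τ : T1 𝒳, M < Multiset.card τ.2 → μ τ = 0) (n : ℕ) :
    degLaw μ n = ∑ τ ∈ FF 𝒳 M, if Multiset.card τ.2 = n then μ τ else 0 := by
  unfold degLaw deg
  refine (hasSum_FF M (fun τ : T1 𝒳 => if Multiset.card τ.2 = n then μ τ else 0) ?_).tsum_eq
  intro τ hτ
  simp [hsupp τ hτ]

theorem deg_sum (hsupp : ∀ τ : T1 𝒳, M < Multiset.card τ.2 → μ τ = 0)
    (hdeg : ∀ n, degLaw μ n = α n) (g : ℕ → ℝ) :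
    ∑ τ ∈ FF 𝒳 M, μ τ * g (Multiset.card τ.2) = ∑ n ∈ Finset.range (M + 1), α n * g n := by
  simp_rw [← hdeg, degLaw_eq hsupp, Finset.sum_mul]
  rw [Finset.sum_comm]
  refine Finset.sum_congr rfl fun τ hτ => ?_
  rw [mem_FF] at hτ
  rw [Finset.sum_eq_single (Multiset.card τ.2)]
  · simp
  · intro n _ hn
    simp [hn.symm]
  · intro hn
    simp at hn
    omega

theorem meanDeg_eq (hsupp : ∀ τ : T1 𝒳, M < Multiset.card τ.2 → μ τ = 0)
    (hdeg : ∀ n, degLaw μ n = α n) {κ : ℝ}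
    (hκdef : κ = ∑ n ∈ Finset.range (M + 1), (n : ℝ) * α n) : meanDeg μ = κ := by
  have h1 := deg_sum hsupp hdeg (fun n => (n : ℝ))
  unfold meanDeg deg
  rw [(hasSum_FF M (fun τ : T1 𝒳 => μ τ * (Multiset.card τ.2 : ℝ)) ?_).tsum_eq, h1, hκdef]
  · exact Finset.sum_congr rfl fun n _ => mul_comm _ _
  · intro τ hτ
    simp [hsupp τ hτ]

theorem nbrRoot_eq (hsupp : ∀ τ : T1 𝒳, M < Multiset.card τ.2 → μ τ = 0) {κ : ℝ}
    (hκ : meanDeg μ = κ) (a b : 𝒳) :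
    nbrRoot μ a b = (1 / κ) * ∑ m ∈ BB 𝒳 M, μ (b, m) * (m.count a : ℝ) := by
  unfold nbrRoot
  rw [hκ, tsum_BB M]
  intro m hm
  simp [hsupp (b, m) hm]

theorem margO_eq (hsupp : ∀ τ : T1 𝒳, M < Multiset.card τ.2 → μ τ = 0) {κ : ℝ}
    (hκ : meanDeg μ = κ) (b : 𝒳) :
    margO μ b = (1 / κ) * ∑ m ∈ BB 𝒳 M, μ (b, m) * (Multiset.card m : ℝ) := by
  unfold margO
  simp_rw [nbrRoot_eq hsupp hκ]
  rw [← Finset.mul_sum, Finset.sum_comm]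
  simp_rw [← Finset.mul_sum, sum_count_univ]

theorem root_sum (hsupp : ∀ τ : T1 𝒳, M < Multiset.card τ.2 → μ τ = 0) {κ : ℝ}
    (hκ : meanDeg μ = κ) (hκpos : 0 < κ) (h : 𝒳 → ℝ) :
    ∑ τ ∈ FF 𝒳 M, μ τ * (Multiset.card τ.2 * h τ.1) = κ * ∑ b, margO μ b * h b := by
  simp_rw [margO_eq hsupp hκ]
  unfold FF
  rw [Finset.sum_product, Finset.mul_sum]
  refine Finset.sum_congr rfl fun x _ => ?_
  rw [mul_assoc, ← mul_assoc, mul_one_div_cancel hκpos.ne', one_mul, Finset.sum_mul]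
  refine Finset.sum_congr rfl fun m _ => ?_
  ring

theorem f_sum (hsupp : ∀ τ : T1 𝒳, M < Multiset.card τ.2 → μ τ = 0) {κ : ℝ}
    (hκ : meanDeg μ = κ) (hκpos : 0 < κ) (h : 𝒳 → ℝ) :
    ∑ τ ∈ FF 𝒳 M, μ τ * (τ.2.map h).sum = κ * ∑ a, marg1 μ a * h a := by
  unfold marg1
  simp_rw [nbrRoot_eq hsupp hκ, ← Finset.mul_sum, mul_assoc]
  rw [← Finset.mul_sum, ← mul_assoc, mul_one_div_cancel hκpos.ne', one_mul]
  unfold FF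
  rw [Finset.sum_product]
  simp_rw [Finset.sum_mul]
  symm
  rw [Finset.sum_comm]
  refine Finset.sum_congr rfl fun x _ => ?_
  rw [Finset.sum_comm]
  refine Finset.sum_congr rfl fun m _ => ?_
  rw [sum_map_univ, Finset.mul_sum]
  exact Finset.sum_congr rfl fun a _ => by ring

theorem sum_margO (hsupp : ∀ τ : T1 𝒳, M < Multiset.card τ.2 → μ τ = 0)
    (hdeg : ∀ n, degLaw μ n = α n) {κ : ℝ}
    (hκdef : κ = ∑ n ∈ Finset.range (M + 1), (n : ℝ) * α n) (hκpos : 0 < κ) :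
    ∑ b, margO μ b = 1 := by
  have h1 := root_sum hsupp (meanDeg_eq hsupp hdeg hκdef) hκpos (fun _ => 1)
  have h2 := deg_sum hsupp hdeg (fun n => (n : ℝ))
  simp only [mul_one] at h1
  rw [h2] at h1
  have h3 : ∑ n ∈ Finset.range (M + 1), α n * (n : ℝ) = κ := by
    rw [hκdef]; exact Finset.sum_congr rfl fun n _ => mul_comm _ _
  rw [h3] at h1
  have : κ * (∑ b, margO μ b - 1) = 0 := by linarith
  rcases mul_eq_zero.1 this with h | h
  · exact absurd h hκpos.ne'
  · linarith

theorem log_sum [Nonempty 𝒳] (hsupp : ∀ τ : T1 𝒳, M < Multiset.card τ.2 → μ τ = 0)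
    (hdeg : ∀ n, degLaw μ n = α n) (lam : ℝ) (ν h : 𝒳 → ℝ) (hν0 : ∀ x, 0 < ν x) :
    ∑ τ ∈ FF 𝒳 M, μ τ * Real.log (rr lam ν h (Multiset.card τ.2) τ.1)
      = lam * ∑ τ ∈ FF 𝒳 M, μ τ * (Multiset.card τ.2 * h τ.1)
        - ∑ n ∈ Finset.range (M + 1), α n * Real.log (ZZ lam ν h n) := by
  rw [← deg_sum hsupp hdeg, Finset.mul_sum, ← Finset.sum_sub_distrib]
  refine Finset.sum_congr rfl fun τ _ => ?_
  rw [log_rr lam ν h hν0]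
  ring

/-- entropy relative to the tilted law -/
def GG (M : ℕ) (lam : ℝ) (ν h : 𝒳 → ℝ) (μ q : T1 𝒳 → ℝ) : ℝ :=
  ∑ τ ∈ FF 𝒳 M, μ τ * Real.log (μ τ / (rr lam ν h (Multiset.card τ.2) τ.1 * q τ))

theorem GG_spec [Nonempty 𝒳] (hsupp : ∀ τ : T1 𝒳, M < Multiset.card τ.2 → μ τ = 0)
    (hμ0 : ∀ τ, 0 ≤ μ τ) (hμ1 : ∑ τ ∈ FF 𝒳 M, μ τ = 1)
    (hdeg : ∀ n, degLaw μ n = α n) (lam : ℝ) (ν h : 𝒳 → ℝ) (hν0 : ∀ x, 0 < ν x)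
    (hα0 : ∀ n, 0 ≤ α n) (hα1 : ∑ n ∈ Finset.range (M + 1), α n = 1)
    (p : 𝒳 → 𝒳 → ℝ) (hp : ∀ x a, 0 ≤ p x a) (hp1 : ∀ x, ∑ a, p x a ≤ 1)
    (hac : ∀ τ, WW ν α p τ = 0 → μ τ = 0) :
    relEnt μ (WW ν α p) = ENNReal.ofReal (GG M lam ν h μ (WW ν α p) +
      (lam * ∑ τ ∈ FF 𝒳 M, μ τ * (Multiset.card τ.2 * h τ.1)
        - ∑ n ∈ Finset.range (M + 1), α n * Real.log (ZZ lam ν h n))) ∧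
    0 ≤ GG M lam ν h μ (WW ν α p) ∧
    (GG M lam ν h μ (WW ν α p) = 0 →
      ∀ τ, μ τ = rr lam ν h (Multiset.card τ.2) τ.1 * WW ν α p τ ∨ M < Multiset.card τ.2) := by
  have hr := rr_pos lam ν h hν0
  have hg := gibbs_sum (FF 𝒳 M) μ (fun τ => rr lam ν h (Multiset.card τ.2) τ.1 * WW ν α p τ) hμ0
    (fun τ => mul_nonneg (hr _ _).le (WW_nonneg ν hν0 α hα0 p hp τ))
    (fun τ h0 => hac τ ((mul_eq_zero.1 h0).resolve_left (hr _ _).ne')) hμ1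
    (sum_tilt_le lam ν h hν0 M α hα0 hα1 p hp hp1)
  refine ⟨?_, hg.1, fun h0 τ => ?_⟩
  · rw [relEnt_eq (FF 𝒳 M) _ _ _ hac,
      tilt_split (FF 𝒳 M) μ (WW ν α p) (fun τ => rr lam ν h (Multiset.card τ.2) τ.1) hac
        (fun τ => hr _ _), log_sum hsupp hdeg lam ν h hν0]
    · rfl
    · intro τ hτ
      rw [mem_FF] at hτ
      exact hsupp τ (by omega)
  · by_cases hτ : τ ∈ FF 𝒳 M
    · exact Or.inl (hg.2 h0 τ hτ)
    · rw [mem_FF] at hτ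
      right; omega

end mu


theorem condNbr_nonneg {μ : T1 𝒳 → ℝ} (h0 : ∀ a b, 0 ≤ nbrRoot μ a b) (a b : 𝒳) :
    0 ≤ condNbr μ a b := by
  unfold condNbr
  split_ifs with h
  · exact div_nonneg (h0 a b) h.le
  · exact le_rfl

theorem sum_condNbr_le {μ : T1 𝒳 → ℝ} (b : 𝒳) : ∑ a, condNbr μ a b ≤ 1 := by
  unfold condNbr
  split_ifs with h
  · rw [← Finset.sum_div]
    exact (div_self h.ne').le
  · simp

/-- Evaluation of both entropies for an admissible law. -/
theorem rate_spec [Nonempty 𝒳] {M : ℕ} {α : ℕ → ℝ} {μ : T1 𝒳 → ℝ} {κ : ℝ}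
    (hκdef : κ = ∑ n ∈ Finset.range (M + 1), (n : ℝ) * α n) (hκpos : 0 < κ)
    (hμ0 : ∀ τ, 0 ≤ μ τ) (hμ1 : HasSum μ 1)
    (hαsupp : ∀ n, M < n → α n = 0)
    (lam : ℝ) (ν h : 𝒳 → ℝ) (hν0 : ∀ x, 0 < ν x)
    (hα0 : ∀ n, 0 ≤ α n) (hα1 : ∑ n ∈ Finset.range (M + 1), α n = 1)
    (hac : ∀ τ, eta1 ν α τ = 0 → μ τ = 0) (hdeg : ∀ n, degLaw μ n = α n)
    (hsym : ∀ a b, nbrRoot μ a b = nbrRoot μ b a) :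
    ∃ L : ℝ, L = lam * (∑' τ : T1 𝒳, μ τ * (τ.2.map h).sum)
        - ∑ n ∈ Finset.range (M + 1), α n * Real.log (ZZ lam ν h n) ∧
      rate ν α μ =
        (ENNReal.ofReal (GG M lam ν h μ (WW ν α fun _ => marg1 μ) + L) +
          ENNReal.ofReal (GG M lam ν h μ (WW ν α fun x a => condNbr μ a x) + L)) / 2 ∧
      0 ≤ GG M lam ν h μ (WW ν α fun _ => marg1 μ) ∧
      0 ≤ GG M lam ν h μ (WW ν α fun x a => condNbr μ a x) ∧
      (GG M lam ν h μ (WW ν α fun _ => marg1 μ) = 0 →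
        ∀ τ, μ τ = rr lam ν h (Multiset.card τ.2) τ.1 * WW ν α (fun _ => marg1 μ) τ) ∧
      (∀ x, marg1 μ x = (1 / κ) * ∑ m ∈ BB 𝒳 M, μ (x, m) * (Multiset.card m : ℝ)) ∧
      ∑ x, marg1 μ x = 1 := by
  have hsupp : ∀ τ : T1 𝒳, M < Multiset.card τ.2 → μ τ = 0 := by
    intro τ hτ
    apply hac
    simp [eta1, hαsupp _ hτ]
  have hκ := meanDeg_eq hsupp hdeg hκdef
  have hμ1' : ∑ τ ∈ FF 𝒳 M, μ τ = 1 := (hasSum_FF M μ hsupp).unique hμ1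
  have hmm : ∀ x, marg1 μ x = margO μ x := fun x =>
    Finset.sum_congr rfl fun b _ => hsym x b
  have hnb0 : ∀ a b, 0 ≤ nbrRoot μ a b := by
    intro a b
    rw [nbrRoot_eq hsupp hκ]
    exact mul_nonneg (by positivity) (Finset.sum_nonneg fun m _ =>
      mul_nonneg (hμ0 _) (Nat.cast_nonneg _))
  have hm0 : ∀ a, 0 ≤ marg1 μ a := fun a => Finset.sum_nonneg fun b _ => hnb0 a b
  have hm1 : ∑ x, marg1 μ x = 1 := by
    simp_rw [hmm]
    exact sum_margO hsupp hdeg hκdef hκpos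
  have hnbpos : ∀ τ : T1 𝒳, μ τ ≠ 0 → ∀ a ∈ τ.2, 0 < nbrRoot μ a τ.1 := by
    intro τ hτ a ha
    rw [nbrRoot_eq hsupp hκ]
    refine mul_pos (by positivity) ?_
    refine Finset.sum_pos' (fun m _ => mul_nonneg (hμ0 _) (Nat.cast_nonneg _)) ⟨τ.2, ?_, ?_⟩
    · rw [mem_BB]
      by_contra hc
      exact hτ (hsupp τ (by omega))
    · refine mul_pos (lt_of_le_of_ne (hμ0 _) (Ne.symm hτ)) ?_
      exact_mod_cast Multiset.count_pos.2 ha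
  have hαpos : ∀ τ : T1 𝒳, μ τ ≠ 0 → α (Multiset.card τ.2) ≠ 0 := by
    intro τ hτ h0
    exact hτ (hac τ (by simp [eta1, h0]))
  have hWac : ∀ p : 𝒳 → 𝒳 → ℝ, (∀ τ : T1 𝒳, μ τ ≠ 0 → ∀ a ∈ τ.2, p τ.1 a ≠ 0) →
      ∀ τ, WW ν α p τ = 0 → μ τ = 0 := by
    intro p hp τ h0
    by_contra hτ
    exact mul_ne_zero (mul_ne_zero (hν0 _).ne' (hαpos τ hτ))
      (mul_ne_zero (ordCoeff_pos _).ne' (prod_map_ne _ _ (hp τ hτ))) h0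
  have hS : ∑ τ ∈ FF 𝒳 M, μ τ * (Multiset.card τ.2 * h τ.1)
      = ∑' τ : T1 𝒳, μ τ * (τ.2.map h).sum := by
    rw [(hasSum_FF M (fun τ : T1 𝒳 => μ τ * (τ.2.map h).sum)
      (fun τ hτ => by simp [hsupp τ hτ])).tsum_eq, f_sum hsupp hκ hκpos, root_sum hsupp hκ hκpos]
    simp_rw [hmm]
  have s1 := GG_spec hsupp hμ0 hμ1' hdeg lam ν h hν0 hα0 hα1 (fun _ => marg1 μ)
    (fun _ a => hm0 a) (fun _ => hm1.le) (hWac _ fun τ hτ a ha =>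
      (Finset.sum_pos' (fun b _ => hnb0 a b) ⟨τ.1, Finset.mem_univ _, hnbpos τ hτ a ha⟩ :
        0 < marg1 μ a).ne')
  have s2 := GG_spec hsupp hμ0 hμ1' hdeg lam ν h hν0 hα0 hα1 (fun x a => condNbr μ a x)
    (fun x a => condNbr_nonneg hnb0 a x) (fun x => sum_condNbr_le x) (hWac _ fun τ hτ a ha => by
      have h1 := hnbpos τ hτ a ha
      have h2 : 0 < margO μ τ.1 :=
        Finset.sum_pos' (fun b _ => hnb0 b τ.1) ⟨a, Finset.mem_univ _, h1⟩
      simp only [condNbr, if_pos h2]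
      exact (div_pos h1 h2).ne')
  refine ⟨_, rfl, ?_, s1.2.1, s2.2.1, ?_, ?_, hm1⟩
  · unfold rate
    rw [if_pos ⟨hac, hdeg, hsym⟩, muCheck_eq ν hν0, muHat_eq ν hν0, s1.1, s2.1, hS]
  · intro h0 τ
    rcases s1.2.2 h0 τ with h1 | h1
    · exact h1
    · rw [hsupp τ h1]
      simp [WW, hαsupp _ h1]
  · intro x
    rw [hmm, margO_eq hsupp hκ]

/-- Sum over neighbours of a tilted product law. -/
theorem nbr_sum {M : ℕ} (A : ℕ → ℝ) (p : 𝒳 → ℝ) (hp : ∑ a, p a = 1) (g : ℕ → ℝ) :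
    ∑ m ∈ BB 𝒳 M, A (Multiset.card m) * ordCoeff m * (m.map p).prod * g (Multiset.card m)
      = ∑ n ∈ Finset.range (M + 1), A n * g n := by
  rw [sum_BB]
  refine Finset.sum_congr rfl fun n _ => ?_
  have : ∀ m ∈ SS 𝒳 n, A (Multiset.card m) * ordCoeff m * (m.map p).prod * g (Multiset.card m)
      = (A n * g n) * (ordCoeff m * (m.map p).prod) := by
    intro m hm
    rw [mem_SS] at hm
    rw [hm]; ring
  rw [Finset.sum_congr rfl this, ← Finset.mul_sum, sum_SS, hp]
  simp

theorem nbr_sum_count {M : ℕ} (A : ℕ → ℝ) (p : 𝒳 → ℝ) (hp : ∑ a, p a = 1) (a : 𝒳) :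
    ∑ m ∈ BB 𝒳 M, A (Multiset.card m) * ordCoeff m * (m.map p).prod * (m.count a : ℝ)
      = (∑ n ∈ Finset.range (M + 1), n * A n) * p a := by
  rw [sum_BB, Finset.sum_mul]
  refine Finset.sum_congr rfl fun n _ => ?_
  have : ∀ m ∈ SS 𝒳 n, A (Multiset.card m) * ordCoeff m * (m.map p).prod * (m.count a : ℝ)
      = A n * (ordCoeff m * (m.map p).prod * (m.count a : ℝ)) := by
    intro m hm
    rw [mem_SS] at hm
    rw [hm]; ring
  rw [Finset.sum_congr rfl this, ← Finset.mul_sum, sum_SS_count p hp]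
  ring

end Helpers

/-- **Solution of the Gibbs conditioning variational problem (Proposition 4.1).**
In the Gibbs setup, suppose `(∑_n n·α n)·(∑_x ν x·h x) < c < κ·max_x h x`, let
`λ > 0` satisfy `∑_{n,x} n·h x·γ (n,x) = c` for the tilted law `γ`, and let
`ψ x = (1/κ) ∑_n n·γ n x` and
`μ* (x, m) = γ (card m) x · (card m)!/∏ₐ count a ! · ∏_{a ∈ m} ψ a`.  Then:
(i) `μ*` is a pmf on `T1` with `∑_τ μ* τ · f τ = c`, where `f (x, m) = ∑_{a ∈ m} h a`;
(ii) `𝕴(μ*) = H(γ ‖ α ⊗ ν)`; and (iii) every pmf `μ` with `∑_τ μ τ · f τ ≥ c`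
satisfies `𝕴(μ) ≥ H(γ ‖ α ⊗ ν)`, with equality iff `μ = μ*`. -/
theorem gibbs_conditioning_minimizer
    {𝒳 : Type} [Fintype 𝒳] [DecidableEq 𝒳] [Nonempty 𝒳]
    (ν : 𝒳 → ℝ) (hν0 : ∀ x, 0 < ν x) (hν1 : ∑ x, ν x = 1)
    (M : ℕ) (α : ℕ → ℝ) (hα0 : ∀ n, 0 ≤ α n) (hαsupp : ∀ n, M < n → α n = 0)
    (hα1 : ∑ n ∈ Finset.range (M + 1), α n = 1)
    (κ : ℝ) (hκdef : κ = ∑ n ∈ Finset.range (M + 1), (n : ℝ) * α n) (hκpos : 0 < κ)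
    (h : 𝒳 → ℝ) (c lam : ℝ)
    (hc1 : κ * ∑ x, ν x * h x < c)
    (hc2 : c < κ * Finset.univ.sup' Finset.univ_nonempty h)
    (hlam : 0 < lam)
    (γ : ℕ → 𝒳 → ℝ)
    (hγdef : ∀ n x, γ n x =
      α n * ν x * Real.exp (lam * n * h x) / ∑ y, ν y * Real.exp (lam * n * h y))
    (hγc : ∑ n ∈ Finset.range (M + 1), ∑ x, (n : ℝ) * h x * γ n x = c)
    (ψ : 𝒳 → ℝ)
    (hψdef : ∀ x, ψ x = (1 / κ) * ∑ n ∈ Finset.range (M + 1), (n : ℝ) * γ n x)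
    (μstar : T1 𝒳 → ℝ)
    (hμstar : ∀ τ : T1 𝒳,
      μstar τ = γ (Multiset.card τ.2) τ.1 * ordCoeff τ.2 * (τ.2.map ψ).prod) :
    ((∀ τ, 0 ≤ μstar τ) ∧ HasSum μstar 1 ∧
        HasSum (fun τ : T1 𝒳 => μstar τ * (τ.2.map h).sum) c) ∧
      rate ν α μstar =
        relEnt (fun p : ℕ × 𝒳 => γ p.1 p.2) (fun p : ℕ × 𝒳 => α p.1 * ν p.2) ∧
      ∀ μ : T1 𝒳 → ℝ, (∀ τ, 0 ≤ μ τ) → HasSum μ 1 →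
        (Summable fun τ : T1 𝒳 => μ τ * (τ.2.map h).sum) →
        c ≤ ∑' τ : T1 𝒳, μ τ * (τ.2.map h).sum →
        relEnt (fun p : ℕ × 𝒳 => γ p.1 p.2) (fun p : ℕ × 𝒳 => α p.1 * ν p.2) ≤
            rate ν α μ ∧
          (rate ν α μ =
              relEnt (fun p : ℕ × 𝒳 => γ p.1 p.2) (fun p : ℕ × 𝒳 => α p.1 * ν p.2) ↔
            μ = μstar) := by
  have hZ : ∀ n : ℕ, ∑ y, ν y * Real.exp (lam * n * h y) = ZZ lam ν h n := fun n => rfl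
  have hγ : ∀ n x, γ n x = α n * (ν x * rr lam ν h n x) := by
    intro n x
    rw [hγdef, hZ, rr]
    ring
  have hr := rr_pos lam ν h hν0
  have hγ0 : ∀ n x, 0 ≤ γ n x := fun n x => by
    rw [hγ]; exact mul_nonneg (hα0 n) (mul_nonneg (hν0 x).le (hr n x).le)
  have hγsupp : ∀ n x, M < n → γ n x = 0 := fun n x hn => by rw [hγ, hαsupp n hn, zero_mul]
  have hγn : ∀ n, ∑ x, γ n x = α n := fun n => by
    simp_rw [hγ, ← Finset.mul_sum, sum_rr lam ν h hν0, mul_one]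
  -- positivity and normalization of ψ
  have hψpos : ∀ x, 0 < ψ x := by
    intro x
    rw [hψdef]
    refine mul_pos (by positivity) ?_
    obtain ⟨n, hn, hn0⟩ : ∃ n ∈ Finset.range (M + 1), 0 < (n : ℝ) * α n := by
      by_contra hcon
      push Not at hcon
      exact absurd (hκdef ▸ Finset.sum_nonpos hcon) (not_le.2 hκpos)
    refine Finset.sum_pos' (fun k _ => mul_nonneg (Nat.cast_nonneg _) (hγ0 k x)) ⟨n, hn, ?_⟩
    rw [hγ, ← mul_assoc]
    exact mul_pos hn0 (mul_pos (hν0 x) (hr n x))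
  have hκψ : ∀ x, ∑ n ∈ Finset.range (M + 1), (n : ℝ) * γ n x = κ * ψ x := by
    intro x
    rw [hψdef, ← mul_assoc, mul_one_div_cancel hκpos.ne', one_mul]
  have hψ1 : ∑ x, ψ x = 1 := by
    have h1 : κ * ∑ x, ψ x = κ := by
      rw [Finset.mul_sum]
      simp_rw [← hκψ]
      rw [Finset.sum_comm]
      simp_rw [← Finset.mul_sum, hγn]
      exact hκdef.symm
    exact mul_left_cancel₀ hκpos.ne' (h1.trans (mul_one κ).symm)
  have hψh : κ * ∑ x, ψ x * h x = c := by
    rw [← hγc, Finset.sum_comm, Finset.mul_sum]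
    refine Finset.sum_congr rfl fun x _ => ?_
    rw [← mul_assoc, ← hκψ, Finset.sum_mul]
    exact Finset.sum_congr rfl fun n _ => by ring
  -- basic facts on μstar
  have hst0 : ∀ τ, 0 ≤ μstar τ := fun τ => by
    rw [hμstar]
    exact mul_nonneg (mul_nonneg (hγ0 _ _) (ordCoeff_pos _).le)
      (prod_map_nonneg _ _ fun a => (hψpos a).le)
  have hstsupp : ∀ τ : T1 𝒳, M < Multiset.card τ.2 → μstar τ = 0 := fun τ hτ => by
    rw [hμstar, hγsupp _ _ hτ]; simp
  have hstW : ∀ τ, μstar τ = rr lam ν h (Multiset.card τ.2) τ.1 * WW ν α (fun _ => ψ) τ :=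
    fun τ => by
      rw [hμstar, hγ, WW]; ring
  have hstsum : ∀ g : ℕ → ℝ, ∑ τ ∈ FF 𝒳 M, μstar τ * g (Multiset.card τ.2)
      = ∑ n ∈ Finset.range (M + 1), α n * g n := by
    intro g
    unfold FF
    rw [Finset.sum_product]
    simp_rw [hμstar]
    have : ∀ x : 𝒳, ∑ m ∈ BB 𝒳 M, γ (Multiset.card m) x * ordCoeff m * (m.map ψ).prod
        * g (Multiset.card m) = ∑ n ∈ Finset.range (M + 1), γ n x * g n :=
      fun x => nbr_sum (fun n => γ n x) ψ hψ1 g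
    simp_rw [this]
    rw [Finset.sum_comm]
    simp_rw [← Finset.sum_mul, hγn]
  have hst1 : HasSum μstar 1 := by
    have h1 := hasSum_FF M μstar hstsupp
    have h2 := hstsum (fun _ => 1)
    simp only [mul_one] at h2
    rwa [h2, hα1] at h1
  have hstdeg : ∀ n, degLaw μstar n = α n := by
    intro n
    rw [degLaw_eq hstsupp]
    have h2 := hstsum (fun k => if k = n then 1 else 0)
    simp only [mul_ite, mul_one, mul_zero] at h2
    rw [h2, Finset.sum_ite_eq']
    split_ifs with hn
    · rfl
    · simp at hn
      rw [hαsupp n (by omega)]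
  have hstκ : meanDeg μstar = κ := meanDeg_eq hstsupp hstdeg hκdef
  have hstnb : ∀ a b, nbrRoot μstar a b = ψ b * ψ a := by
    intro a b
    rw [nbrRoot_eq hstsupp hstκ]
    simp_rw [hμstar]
    have : ∑ m ∈ BB 𝒳 M, γ (Multiset.card m) b * ordCoeff m * (m.map ψ).prod * (m.count a : ℝ)
        = (∑ n ∈ Finset.range (M + 1), n * γ n b) * ψ a :=
      nbr_sum_count (fun n => γ n b) ψ hψ1 a
    rw [this, hκψ]
    field_simp
  have hstm1 : marg1 μstar = ψ := by
    funext a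
    unfold marg1
    simp_rw [hstnb, ← Finset.sum_mul, hψ1, one_mul]
  have hstmO : ∀ b, margO μstar b = ψ b := by
    intro b
    unfold margO
    simp_rw [hstnb, ← Finset.mul_sum, hψ1, mul_one]
  have hstc : ∀ a b, condNbr μstar a b = ψ a := by
    intro a b
    unfold condNbr
    rw [hstmO, if_pos (hψpos b), hstnb, mul_div_cancel_left₀ _ (hψpos b).ne']
  have hstf : HasSum (fun τ : T1 𝒳 => μstar τ * (τ.2.map h).sum) c := by
    have h1 := hasSum_FF M (fun τ : T1 𝒳 => μstar τ * (τ.2.map h).sum)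
      (fun τ hτ => by simp [hstsupp τ hτ])
    rwa [f_sum hstsupp hstκ hκpos, hstm1, hψh] at h1
  -- the entropy of γ
  have hK : ∃ K : ℝ, 0 ≤ K ∧
      K = lam * c - ∑ n ∈ Finset.range (M + 1), α n * Real.log (ZZ lam ν h n) ∧
      relEnt (fun p : ℕ × 𝒳 => γ p.1 p.2) (fun p : ℕ × 𝒳 => α p.1 * ν p.2)
        = ENNReal.ofReal K := by
    have hac : ∀ p : ℕ × 𝒳, α p.1 * ν p.2 = 0 → γ p.1 p.2 = 0 := by
      intro p hp
      rw [hγ, ← mul_assoc, hp, zero_mul]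
    refine ⟨_, ?_, ?_, relEnt_eq (Finset.range (M + 1) ×ˢ (Finset.univ : Finset 𝒳)) _ _ ?_ hac⟩
    · refine (gibbs_sum (Finset.range (M + 1) ×ˢ (Finset.univ : Finset 𝒳)) _ _
        (fun p => hγ0 _ _) (fun p => mul_nonneg (hα0 _) (hν0 _).le) hac ?_ ?_).1
      · rw [Finset.sum_product]
        simp_rw [hγn]
        exact hα1
      · rw [Finset.sum_product]
        simp_rw [← Finset.mul_sum, hν1, mul_one]
        exact hα1.le
    · rw [Finset.sum_product, ← hγc, Finset.mul_sum, ← Finset.sum_sub_distrib]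
      refine Finset.sum_congr rfl fun n _ => ?_
      rw [← hγn, Finset.sum_mul, Finset.mul_sum, ← Finset.sum_sub_distrib]
      refine Finset.sum_congr rfl fun x _ => ?_
      by_cases h0 : α n = 0
      · simp [hγ, h0]
      have e : γ n x / (α n * ν x) = rr lam ν h n x := by
        rw [hγ]
        have := (hν0 x).ne'
        field_simp
      simp only
      rw [e, log_rr lam ν h hν0]
      ring
    · intro p hp
      simp at hp
      exact hγsupp _ _ (by omega)
  obtain ⟨K, hK0, hKdef, hKeq⟩ := hK
  rw [hKeq]
  have hstrate : rate ν α μstar = ENNReal.ofReal K := by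
    obtain ⟨L, hL, hrate, -⟩ := rate_spec hκdef hκpos hst0 hst1 hαsupp lam ν h hν0 hα0 hα1
      (fun τ h0 => by
        have h1 : α (Multiset.card τ.2) = 0 := by
          by_contra hα
          exact mul_ne_zero (mul_ne_zero (mul_ne_zero (hν0 _).ne' hα) (ordCoeff_pos _).ne')
            (prod_map_ne _ _ fun a _ => (hν0 a).ne') h0
        rw [hμstar, hγ, h1]; simp)
      hstdeg (fun a b => by rw [hstnb, hstnb, mul_comm])
    have hc' : (fun x a => condNbr μstar a x) = fun _ => ψ := by
      funext x a; exact hstc a x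
    have hG : GG M lam ν h μstar (WW ν α fun _ => ψ) = 0 := by
      unfold GG
      refine Finset.sum_eq_zero fun τ _ => ?_
      rw [← hstW]
      by_cases h0 : μstar τ = 0
      · simp [h0]
      · simp [div_self h0]
    rw [hstf.tsum_eq, ← hKdef] at hL
    rw [hrate, hc', hstm1, hG, hL, zero_add, ENNReal.add_div, ENNReal.add_halves]
  refine ⟨⟨hst0, hst1, hstf⟩, hstrate, ?_⟩
  intro μ hμ0 hμ1 _ hμc
  by_cases hadm : (∀ τ, eta1 ν α τ = 0 → μ τ = 0) ∧ (∀ n, degLaw μ n = α n) ∧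
      (∀ a b, nbrRoot μ a b = nbrRoot μ b a)
  swap
  · have htop : rate ν α μ = ⊤ := by
      unfold rate; rw [if_neg hadm]
    refine ⟨by rw [htop]; exact le_top, fun h1 => ?_, fun h1 => by rw [h1]; exact hstrate⟩
    rw [htop] at h1
    exact absurd h1.symm ENNReal.ofReal_ne_top
  obtain ⟨L, hL, hrate, hG1, hG2, hGeq, hmarg, hm1⟩ := rate_spec hκdef hκpos hμ0 hμ1 hαsupp lam ν h
    hν0 hα0 hα1 hadm.1 hadm.2.1 hadm.2.2
  have hLK : K ≤ L := by
    rw [hL, hKdef]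
    have := mul_le_mul_of_nonneg_left hμc hlam.le
    linarith
  set G1 := GG M lam ν h μ (WW ν α fun _ => marg1 μ)
  set G2 := GG M lam ν h μ (WW ν α fun x a => condNbr μ a x)
  have hrate2 : rate ν α μ = ENNReal.ofReal ((G1 + L + (G2 + L)) / 2) := by
    rw [hrate, ← ENNReal.ofReal_add (by linarith) (by linarith),
      ENNReal.ofReal_div_of_pos (by norm_num)]
    simp
  refine ⟨?_, fun heq => ?_, fun h1 => by rw [h1]; exact hstrate⟩
  · rw [hrate2]
    exact ENNReal.ofReal_le_ofReal (by linarith)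
  · rw [hrate2, ENNReal.ofReal_eq_ofReal_iff (by linarith) hK0] at heq
    have hμeq := hGeq (by linarith)
    have hμeq' : ∀ τ : T1 𝒳, μ τ
        = γ (Multiset.card τ.2) τ.1 * ordCoeff τ.2 * (τ.2.map (marg1 μ)).prod := by
      intro τ
      rw [hμeq, hγ, WW]; ring
    have hmψ : marg1 μ = ψ := by
      funext x
      have h1 : ∑ m ∈ BB 𝒳 M, μ (x, m) * (Multiset.card m : ℝ)
          = ∑ n ∈ Finset.range (M + 1), γ n x * n := by
        rw [← nbr_sum (fun n => γ n x) (marg1 μ) hm1 (fun n => (n : ℝ))]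
        exact Finset.sum_congr rfl fun m _ => by rw [hμeq' (x, m)]
      rw [hmarg, hψdef, h1]
      congr 1
      exact Finset.sum_congr rfl fun n _ => mul_comm _ _
    funext τ
    rw [hμeq' τ, hmψ, hμstar]
end
end
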